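/- Let c > 0, set q_n = 1 − c/n and b*(c) = (1/c) log(1 + (e^c − 1)/e), and let (M_n^*) be a sequence of integers with 1 ≤ M_n^* ≤ n−1 and lim_{n→∞} M_n^*/n = b*(c). Then lim_{n→∞} 𝒫_n^{q_n}(S(n,M_n^*)) = 1/e. -/

import Mathlib

open Finset Filter

/-- The number of inversions of a permutation of `Fin n`. -/
def invCount (n : ℕ) (σ : Equiv.Perm (Fin n)) : ℕ :=
  (Finset.univ.filter (fun p : Fin n × Fin n => p.1 < p.2 ∧ σ p.2 < σ p.1)).card

/-- Normalization constant of the Mallows distribution: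
`Z_n(q) = ∑_{σ ∈ S_n} q^{inv σ}`. -/
noncomputable def mallowsZ (n : ℕ) (q : ℝ) : ℝ :=
  ∑ σ : Equiv.Perm (Fin n), q ^ invCount n σ

/-- The Mallows probability of a set `A` of permutations:
`P_n^q(A) = (∑_{σ ∈ A} q^{inv σ}) / Z_n(q)`. -/
noncomputable def mallowsProb (n : ℕ) (q : ℝ) (A : Finset (Equiv.Perm (Fin n))) : ℝ :=
  (∑ σ ∈ A, q ^ invCount n σ) / mallowsZ n q

/-- The success event for the strategy `S(n,M)`.  Positions are indexed by `Fin n`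
(the index `i : Fin n` represents the `(i+1)`-st arriving item) and ranks are the
values of `σ` (the value `n-1`, i.e. the top of `Fin n`, represents the highest
rank `n`).  For `M ≥ 1` the strategy succeeds iff for some position `j` with
`(j:ℕ) ≥ M` (i.e. item number `j+1 ≥ M+1`) the item at position `j` has the top
rank and the maximum rank among the items strictly before position `j` equals the
maximum rank among the first `M` items.  For `M = 0` it succeeds iff the first
item has top rank. -/
def winEvent (n M : ℕ) : Finset (Equiv.Perm (Fin n)) :=
  if M = 0 then
    Finset.univ.filter (fun σ => ∀ i : Fin n, (i : ℕ) = 0 → (σ i : ℕ) = n - 1)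
  else
    Finset.univ.filter (fun σ => ∃ j : Fin n, M ≤ (j : ℕ) ∧ (σ j : ℕ) = n - 1 ∧
      (Finset.univ.filter (fun i : Fin n => i < j)).sup (fun i => (σ i : ℕ)) =
      (Finset.univ.filter (fun i : Fin n => (i : ℕ) < M)).sup (fun i => (σ i : ℕ)))

/-- `𝒫_n^q(S(n,M))`, the success probability of the strategy `S(n,M)` under the
Mallows distribution with parameter `q`. -/
noncomputable def succProb (n M : ℕ) (q : ℝ) : ℝ := mallowsProb n q (winEvent n M)


/-- Insert a last value `k` after the permutation `e`. -/
def insLast (n : ℕ) (x : Fin (n+1) × Equiv.Perm (Fin n)) : Equiv.Perm (Fin (n+1)) :=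
  ((finSuccEquiv' (Fin.last n)).trans (Equiv.optionCongr x.2)).trans (finSuccEquiv' x.1).symm

lemma insLast_last (n : ℕ) (x) : insLast n x (Fin.last n) = x.1 := by
  simp [insLast]

lemma insLast_castSucc (n : ℕ) (x) (i : Fin n) :
    insLast n x i.castSucc = x.1.succAbove (x.2 i) := by
  have : finSuccEquiv' (Fin.last n) i.castSucc = some i := by
    rw [← Fin.succAbove_last]; simp
  simp [insLast, this]

lemma insLast_bij (n : ℕ) : Function.Bijective (insLast n) := by
  rw [Fintype.bijective_iff_injective_and_card]
  constructor
  · rintro ⟨k, e⟩ ⟨k', e'⟩ h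
    have h1 := congrArg (fun f => f (Fin.last n)) h
    simp only [insLast_last] at h1
    subst h1
    have : e = e' := by
      ext i
      have h2 := congrArg (fun f => f i.castSucc) h
      simp only [insLast_castSucc] at h2
      rw [Fin.succAbove_right_injective h2]
    rw [this]
  · simp [Fintype.card_perm, Nat.factorial_succ]

lemma invCount_eq (n : ℕ) (σ : Equiv.Perm (Fin n)) :
    invCount n σ = ∑ i, ∑ j, if i < j ∧ σ j < σ i then 1 else 0 := by
  rw [invCount, Finset.card_filter, ← Finset.univ_product_univ, Finset.sum_product]

lemma invCount_insLast (n : ℕ) (k : Fin (n+1)) (e : Equiv.Perm (Fin n)) :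
    invCount (n+1) (insLast n (k, e)) = invCount n e + (n - k) := by
  rw [invCount_eq, invCount_eq, Fin.sum_univ_castSucc]
  simp only [Fin.sum_univ_castSucc, insLast_last, insLast_castSucc, Finset.sum_add_distrib]
  have h1 : ∀ j : Fin n, ¬ (Fin.last n < j.castSucc) := fun j => by
    simp [Fin.lt_def]
  simp only [h1, lt_irrefl, false_and, if_false, Finset.sum_const_zero, add_zero,
    Fin.castSucc_lt_castSucc_iff, Fin.succAbove_lt_succAbove_iff, Fin.castSucc_lt_last, true_and]
  congr 1
  rw [Equiv.sum_comp e (fun i => if k < k.succAbove i then 1 else 0)]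
  simp only [Fin.lt_succAbove_iff_le_castSucc]
  have : ∀ i : Fin n, (if k ≤ i.castSucc then 1 else 0) = (fun i : ℕ => if (k:ℕ) ≤ i then 1 else 0) i := by
    intro i; simp [Fin.le_def]
  rw [Finset.sum_congr rfl (fun i _ => this i), Fin.sum_univ_eq_sum_range (fun i : ℕ => if (k:ℕ) ≤ i then 1 else 0),
    ← Finset.card_filter]
  have : (range n).filter (fun i => (k:ℕ) ≤ i) = Finset.Ico (k:ℕ) n := by
    ext i; simp; omega
  rw [this, Nat.card_Ico]

/-- The maximum occurs among the first `M`. -/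
def NR (n M : ℕ) (σ : Equiv.Perm (Fin n)) : Prop := ∃ i : Fin n, (i:ℕ) < M ∧ (σ i : ℕ) + 1 = n

/-- Exactly one record after `M`. -/
def Win (n M : ℕ) (σ : Equiv.Perm (Fin n)) : Prop :=
  ∃ j : Fin n, M ≤ (j:ℕ) ∧ (σ j : ℕ) + 1 = n ∧ ∀ i, i < j → ∃ l : Fin n, (l:ℕ) < M ∧ σ i ≤ σ l

lemma mem_winEvent (n M : ℕ) (hM : 1 ≤ M) (σ : Equiv.Perm (Fin n)) :
    σ ∈ winEvent n M ↔ Win n M σ := by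
  unfold winEvent Win
  rw [if_neg (by omega)]
  simp only [Finset.mem_filter, Finset.mem_univ, true_and]
  refine exists_congr fun j => and_congr_right fun hj => ?_
  refine and_congr (by have := j.2; omega) ?_
  have hpos : 0 < n := j.pos
  have hj0 : (Finset.univ.filter (fun i : Fin n => (i : ℕ) < M)).Nonempty :=
    ⟨⟨0, hpos⟩, by simp; omega⟩
  constructor
  · intro h i hi
    obtain ⟨l, hl, hl'⟩ := Finset.exists_mem_eq_sup _ hj0 (fun i => (σ i : ℕ))
    refine ⟨l, by simpa using hl, ?_⟩
    rw [Fin.le_def, ← hl', ← h]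
    exact Finset.le_sup (f := fun i => (σ i : ℕ)) (by simpa using hi)
  · intro h
    apply le_antisymm
    · apply Finset.sup_le
      intro i hi
      obtain ⟨l, hl, hl'⟩ := h i (by simpa using hi)
      exact le_trans (Fin.le_def.1 hl') (Finset.le_sup (f := fun i => (σ i : ℕ)) (by simpa using hl))
    · apply Finset.sup_mono
      intro i hi
      simp only [Finset.mem_filter, Finset.mem_univ, true_and] at hi ⊢
      rw [Fin.lt_def]; omega

lemma succAbove_top (n : ℕ) (k : Fin (n+1)) (hk : k ≠ Fin.last n) (i : Fin n) :
    ((k.succAbove i : Fin (n+1)) : ℕ) + 1 = n + 1 ↔ (i:ℕ) + 1 = n := by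
  have hk' : (k:ℕ) < n := by
    have := k.2
    have : (k:ℕ) ≠ n := fun h => hk (Fin.ext (by simpa using h))
    omega
  rw [Fin.succAbove]
  have := i.2
  split_ifs with h
  · simp [Fin.lt_def] at h ⊢; omega
  · simp

lemma NR_ins (n M : ℕ) (hMn : M ≤ n) (k : Fin (n+1)) (e : Equiv.Perm (Fin n)) :
    NR (n+1) M (insLast n (k, e)) ↔ k ≠ Fin.last n ∧ NR n M e := by
  unfold NR
  rw [Fin.exists_iff_castSucc]
  simp only [insLast_last, insLast_castSucc, Fin.val_last, Fin.val_castSucc]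
  by_cases hk : k = Fin.last n
  · subst hk
    simp only [Fin.succAbove_last, Fin.val_castSucc, ne_eq, not_true_eq_false, false_and, iff_false]
    rintro (h | ⟨i, h, h'⟩)
    · omega
    · have := (e i).2; omega
  · simp only [succAbove_top n k hk, ne_eq, hk, not_false_eq_true, true_and]
    constructor
    · rintro (h | h)
      · omega
      · exact h
    · exact Or.inr

lemma NR_iff (n M : ℕ) (hMn : M ≤ n) (hM : 1 ≤ M) (e : Equiv.Perm (Fin n)) :
    NR n M e ↔ ∀ i, ∃ l : Fin n, (l:ℕ) < M ∧ e i ≤ e l := by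
  have hpos : 0 < n := by omega
  constructor
  · rintro ⟨l, hl, hl'⟩ i
    refine ⟨l, hl, ?_⟩
    rw [Fin.le_def]
    have := (e i).2
    omega
  · intro h
    obtain ⟨l, hl, hl'⟩ := h (e.symm ⟨n-1, by omega⟩)
    refine ⟨l, hl, ?_⟩
    simp [Fin.le_def] at hl'
    have := (e l).2
    omega

lemma Win_ins (n M : ℕ) (hMn : M ≤ n) (hM : 1 ≤ M) (k : Fin (n+1)) (e : Equiv.Perm (Fin n)) :
    Win (n+1) M (insLast n (k, e)) ↔
      (k = Fin.last n ∧ NR n M e) ∨ (k ≠ Fin.last n ∧ Win n M e) := by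
  rw [NR_iff n M hMn hM]
  unfold Win
  have key : ∀ i : Fin n, (∃ l : Fin (n+1), (l:ℕ) < M ∧
      k.succAbove (e i) ≤ insLast n (k, e) l) ↔ ∃ l : Fin n, (l:ℕ) < M ∧ e i ≤ e l := by
    intro i
    rw [Fin.exists_iff_castSucc]
    simp only [insLast_castSucc, Fin.val_last, Fin.val_castSucc, Fin.succAbove_le_succAbove_iff]
    constructor
    · rintro (h | h)
      · omega
      · exact h
    · exact Or.inr
  rw [Fin.exists_iff_castSucc]
  simp only [Fin.forall_fin_succ', key, Fin.castSucc_lt_castSucc_iff, Fin.castSucc_lt_last,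
    lt_irrefl, Fin.val_last, Fin.val_castSucc, insLast_last, insLast_castSucc]
  have h1 : ∀ j : Fin n, ¬ (Fin.last n < j.castSucc) := fun j => by
    simp [Fin.lt_def]
  simp only [h1, forall_const, false_imp_iff, and_true, hMn, true_and]
  by_cases hk : k = Fin.last n
  · subst hk
    simp only [Fin.val_last, true_and, Fin.succAbove_last, Fin.val_castSucc, ne_eq, not_true_eq_false, false_and, or_false]
    constructor
    · rintro (h | ⟨j, _, h, _⟩)
      · exact h
      · have := (e j).2; omega
    · exact Or.inl
  · simp only [succAbove_top n k hk, ne_eq, hk, not_false_eq_true, true_and, false_and, false_or]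
    have : ¬ ((k:ℕ) + 1 = n + 1) := fun h => hk (Fin.ext (by simpa using h))
    simp only [this, false_and, false_or]

open Classical in
/-- weight of a predicate -/
noncomputable def wt (n : ℕ) (q : ℝ) (P : Equiv.Perm (Fin n) → Prop) : ℝ :=
  ∑ σ : Equiv.Perm (Fin n), if P σ then q ^ invCount n σ else 0

/-- q-integer -/
noncomputable def qn (q : ℝ) (n : ℕ) : ℝ := ∑ i ∈ range n, q ^ i

lemma wt_ins (n : ℕ) (q : ℝ) (P : Equiv.Perm (Fin (n+1)) → Prop)
    (Q R : Equiv.Perm (Fin n) → Prop)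
    (hP : ∀ k e, P (insLast n (k, e)) ↔ (k = Fin.last n ∧ Q e) ∨ (k ≠ Fin.last n ∧ R e)) :
    wt (n+1) q P = wt n q Q + q * qn q n * wt n q R := by
  classical
  unfold wt
  rw [← (Equiv.ofBijective _ (insLast_bij n)).sum_comp]
  simp only [Equiv.ofBijective_apply]
  rw [Fintype.sum_prod_type, Fin.sum_univ_castSucc, add_comm]
  congr 1
  · refine Finset.sum_congr rfl fun e _ => ?_
    simp [hP, invCount_insLast]
  · have : ∀ i : Fin n, (∑ e : Equiv.Perm (Fin n), if P (insLast n (i.castSucc, e)) then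
        q ^ invCount (n+1) (insLast n (i.castSucc, e)) else 0) =
        (fun i : ℕ => q ^ (n - i)) i * ∑ e : Equiv.Perm (Fin n), if R e then q ^ invCount n e else 0 := by
      intro i
      rw [Finset.mul_sum]
      refine Finset.sum_congr rfl fun e _ => ?_
      simp only [hP, invCount_insLast, (Fin.castSucc_lt_last i).ne, false_and, false_or, ne_eq,
        not_false_eq_true, true_and, mul_ite, mul_zero, Fin.val_castSucc, pow_add]
      split_ifs <;> ring
    rw [Finset.sum_congr rfl fun i _ => this i, ← Finset.sum_mul,
      Fin.sum_univ_eq_sum_range (fun i : ℕ => q ^ (n - i))]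
    congr 1
    rw [qn, Finset.mul_sum, ← Finset.sum_range_reflect]
    refine Finset.sum_congr rfl fun i hi => ?_
    have := Finset.mem_range.1 hi
    rw [← pow_succ']
    congr 1; omega

lemma qn_succ (q : ℝ) (n : ℕ) : qn q (n+1) = 1 + q * qn q n := by
  rw [qn, Finset.sum_range_succ', qn, Finset.mul_sum]
  simp [pow_succ']; ring

lemma qn_pos (q : ℝ) (hq : 0 < q) (n : ℕ) (hn : 1 ≤ n) : 0 < qn q n :=
  Finset.sum_pos (fun i _ => by positivity) (by simp; omega)

lemma mallowsZ_wt (n : ℕ) (q : ℝ) : mallowsZ n q = wt n q (fun _ => True) := by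
  simp [mallowsZ, wt]

lemma mallowsZ_succ (n : ℕ) (q : ℝ) : mallowsZ (n+1) q = qn q (n+1) * mallowsZ n q := by
  rw [mallowsZ_wt, wt_ins n q _ (fun _ => True) (fun _ => True), mallowsZ_wt, qn_succ]
  · ring
  · intro k e; simp [em]

lemma mallowsZ_pos (n : ℕ) (q : ℝ) (hq : 0 < q) : 0 < mallowsZ n q :=
  Finset.sum_pos (fun i _ => by positivity) ⟨1, by simp⟩

lemma NR_succ (n M : ℕ) (q : ℝ) (hMn : M ≤ n) :
    wt (n+1) q (NR (n+1) M) = q * qn q n * wt n q (NR n M) := by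
  rw [wt_ins n q _ (fun _ => False) (NR n M)]
  · simp [wt]
  · intro k e; rw [NR_ins n M hMn]; simp

lemma Win_succ (n M : ℕ) (q : ℝ) (hMn : M ≤ n) (hM : 1 ≤ M) :
    wt (n+1) q (Win (n+1) M) = wt n q (NR n M) + q * qn q n * wt n q (Win n M) :=
  wt_ins n q _ _ _ (fun k e => Win_ins n M hMn hM k e)

lemma NR_base (M : ℕ) (hM : 1 ≤ M) (q : ℝ) : wt M q (NR M M) = mallowsZ M q := by
  rw [mallowsZ_wt]
  congr 1
  ext σ
  simp only [iff_true]
  refine ⟨σ.symm ⟨M-1, by omega⟩, Fin.is_lt _, ?_⟩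
  simp; omega

lemma Win_base (M : ℕ) (q : ℝ) : wt M q (Win M M) = 0 := by
  apply Finset.sum_eq_zero
  intro σ _
  rw [if_neg]
  rintro ⟨j, hj, _⟩
  have := j.2
  omega

/-- main prefactor -/
noncomputable def aa (q : ℝ) (M n : ℕ) : ℝ := q ^ (n - M) * qn q M / qn q n

lemma NR_closed (q : ℝ) (hq : 0 < q) (M : ℕ) (hM : 1 ≤ M) (n : ℕ) (hn : M ≤ n) :
    wt n q (NR n M) = aa q M n * mallowsZ n q := by
  induction n, hn using Nat.le_induction with
  | base =>
    have := (qn_pos q hq M hM).ne'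
    rw [NR_base M hM, aa]; field_simp; simp
  | succ n hn ih =>
    have h1 := (qn_pos q hq n (by omega)).ne'
    have h2 := (qn_pos q hq (n+1) (by omega)).ne'
    rw [NR_succ n M q hn, ih, mallowsZ_succ, aa, aa, Nat.succ_sub hn, pow_succ]
    field_simp

lemma Win_closed (q : ℝ) (hq : 0 < q) (M : ℕ) (hM : 1 ≤ M) (n : ℕ) (hn : M ≤ n) :
    wt n q (Win n M) = aa q M n * (∑ j ∈ Ico M n, 1 / (q * qn q j)) * mallowsZ n q := by
  induction n, hn using Nat.le_induction with
  | base => simp [Win_base]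
  | succ n hn ih =>
    have h1 := (qn_pos q hq n (by omega)).ne'
    have h2 := (qn_pos q hq (n+1) (by omega)).ne'
    rw [Win_succ n M q hn hM, ih, NR_closed q hq M hM n hn, mallowsZ_succ,
      Finset.sum_Ico_succ_top hn, aa, aa, Nat.succ_sub hn, pow_succ]
    field_simp
    ring

lemma succProb_closed (q : ℝ) (hq : 0 < q) (M : ℕ) (hM : 1 ≤ M) (n : ℕ) (hn : M ≤ n) :
    succProb n M q = aa q M n * (∑ j ∈ Ico M n, 1 / (q * qn q j)) := by
  have hZ := (mallowsZ_pos n q hq).ne'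
  rw [succProb, mallowsProb, div_eq_iff hZ, ← Win_closed q hq M hM n hn, wt, ← Finset.sum_filter]
  congr 1
  ext σ
  simp [mem_winEvent n M hM]

lemma aa_pos (q : ℝ) (hq : 0 < q) (M : ℕ) (hM : 1 ≤ M) (n : ℕ) (hn : M ≤ n) : 0 < aa q M n := by
  have h1 := qn_pos q hq n (by omega)
  have h2 := qn_pos q hq M (by omega)
  unfold aa; positivity

lemma aa_succ (q : ℝ) (hq : 0 < q) (M : ℕ) (hM : 1 ≤ M) (n : ℕ) (hn : M ≤ n) :
    -Real.log (aa q M (n+1)) = -Real.log (aa q M n) + Real.log (1 + 1 / (q * qn q n)) := by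
  have h1 := qn_pos q hq n (by omega)
  have h2 := qn_pos q hq (n+1) (by omega)
  have h3 : aa q M n = aa q M (n+1) * (1 + 1 / (q * qn q n)) := by
    have : 1 + 1 / (q * qn q n) = qn q (n+1) / (q * qn q n) := by
      rw [qn_succ]; field_simp; ring
    rw [this, aa, aa, Nat.succ_sub hn, pow_succ]
    field_simp
  rw [h3, Real.log_mul (aa_pos q hq M hM _ (by omega)).ne' (by positivity)]
  ring

lemma log_lower (q : ℝ) (hq : 0 < q) (M : ℕ) (hM : 1 ≤ M) (n : ℕ) (hn : M ≤ n) :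
    -Real.log (aa q M n) ≤ ∑ j ∈ Ico M n, 1 / (q * qn q j) := by
  induction n, hn using Nat.le_induction with
  | base => simp [aa, (qn_pos q hq M hM).ne']
  | succ n hn ih =>
    have h1 := qn_pos q hq n (by omega)
    rw [aa_succ q hq M hM n hn, Finset.sum_Ico_succ_top hn]
    have := Real.log_le_sub_one_of_pos (show 0 < 1 + 1 / (q * qn q n) by positivity)
    linarith

lemma log_upper (q : ℝ) (hq : 0 < q) (M : ℕ) (hM : 1 ≤ M) (n : ℕ) (hn : M ≤ n) :
    q * ∑ j ∈ Ico M n, 1 / (q * qn q j) + 1 / qn q n ≤ -Real.log (aa q M n) + 1 / qn q M := by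
  induction n, hn using Nat.le_induction with
  | base => simp [aa, (qn_pos q hq M hM).ne']
  | succ n hn ih =>
    have h1 := qn_pos q hq n (by omega)
    have h2 := qn_pos q hq (n+1) (by omega)
    rw [aa_succ q hq M hM n hn, Finset.sum_Ico_succ_top hn]
    have := Real.one_sub_inv_le_log_of_pos (show 0 < 1 + 1 / (q * qn q n) by positivity)
    have h4 : 1 - (1 + 1 / (q * qn q n))⁻¹ = 1 / qn q (n+1) := by
      rw [qn_succ]; field_simp; ring
    have h5 : q * (1 / (q * qn q n)) = 1 / qn q n := by field_simp
    rw [mul_add, h5]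
    linarith

theorem stmt_4 (c : ℝ) (hc : 0 < c)
    (Mstar : ℕ → ℕ) (hMstar : ∀ n, 2 ≤ n → 1 ≤ Mstar n ∧ Mstar n ≤ n - 1)
    (hlim : Tendsto (fun n : ℕ => (Mstar n : ℝ) / n) atTop
      (nhds ((1 / c) * Real.log (1 + (Real.exp c - 1) / Real.exp 1)))) :
    Tendsto (fun n : ℕ => succProb n (Mstar n) (1 - c / n)) atTop
      (nhds (Real.exp 1)⁻¹) := by
  set L := Real.log (1 + (Real.exp c - 1) / Real.exp 1) with hL
  have hec : 0 < Real.exp c - 1 := by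
    have := Real.add_one_lt_exp hc.ne'
    linarith
  have hLpos : 0 < L := Real.log_pos (by
    have : 0 < (Real.exp c - 1) / Real.exp 1 := by positivity
    linarith)
  have heL : Real.exp L = 1 + (Real.exp c - 1) / Real.exp 1 := Real.exp_log (by positivity)
  have hcn : Tendsto (fun n : ℕ => c / (n:ℝ)) atTop (nhds 0) := tendsto_const_div_atTop_nhds_zero_nat c
  have hq1 : Tendsto (fun n : ℕ => 1 - c / (n:ℝ)) atTop (nhds 1) := by
    simpa using (tendsto_const_nhds (x := (1:ℝ))).sub hcn
  have hq0 : ∀ᶠ n : ℕ in atTop, 0 < 1 - c / (n:ℝ) := hq1.eventually (lt_mem_nhds one_pos)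
  have hlog : Tendsto (fun n : ℕ => (n:ℝ) * Real.log (1 - c / n)) atTop (nhds (-c)) := by
    have := (Real.tendsto_mul_log_one_add_div_atTop (-c)).comp tendsto_natCast_atTop_atTop
    refine this.congr fun n => ?_
    simp [neg_div, sub_eq_add_neg]
  have hpow : ∀ (K : ℕ → ℕ) (b : ℝ), Tendsto (fun n : ℕ => (K n : ℝ) / n) atTop (nhds b) →
      Tendsto (fun n : ℕ => (1 - c / (n:ℝ)) ^ (K n)) atTop (nhds (Real.exp (b * (-c)))) := by
    intro K b hK
    have := (Real.continuous_exp.tendsto _).comp (hK.mul hlog)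
    refine this.congr' ?_
    filter_upwards [hq0, eventually_gt_atTop 0] with n hn hn0
    have : (n:ℝ) ≠ 0 := by positivity
    simp only [Function.comp]
    rw [← mul_assoc, div_mul_cancel₀ _ this, Real.exp_nat_mul, Real.exp_log hn]
  have hPM := hpow Mstar _ hlim
  have hPn := hpow (fun n => n) 1 (by
    refine tendsto_const_nhds.congr' ?_
    filter_upwards [eventually_gt_atTop 0] with n hn
    have : (n:ℝ) ≠ 0 := by positivity
    field_simp)
  have e1 : 1 / c * L * -c = -L := by field_simp
  rw [e1] at hPM
  rw [one_mul] at hPn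
  have hM1 : (1 - Real.exp (-L)) ≠ 0 := by
    have : Real.exp (-L) < 1 := by simpa using hLpos
    linarith
  have hn1 : (1 - Real.exp (-c)) ≠ 0 := by
    have : Real.exp (-c) < 1 := by simpa using hc
    linarith
  have hqn : ∀ n : ℕ, 0 < n → ∀ m, qn (1 - c / (n:ℝ)) m = (1 - (1 - c / (n:ℝ)) ^ m) / (c / n) := by
    intro n hn m
    have hn' : (0:ℝ) < n := by positivity
    have h : c / (n:ℝ) ≠ 0 := by positivity
    rw [qn, eq_div_iff h]
    have := geom_sum_mul (1 - c / (n:ℝ)) m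
    linarith
  have hinv : Tendsto (fun n : ℕ => 1 / qn (1 - c / (n:ℝ)) (Mstar n)) atTop (nhds 0) := by
    have := hcn.div ((tendsto_const_nhds (x := (1:ℝ))).sub hPM) hM1
    rw [zero_div] at this
    refine this.congr' ?_
    filter_upwards [eventually_gt_atTop 0] with n hn
    rw [hqn n hn, one_div_div, Pi.div_apply]
  have ha : Tendsto (fun n : ℕ => aa (1 - c / (n:ℝ)) (Mstar n) n) atTop (nhds (Real.exp 1)⁻¹) := by
    have h := ((hPn.div hPM (Real.exp_pos _).ne').mul
      ((tendsto_const_nhds (x := (1:ℝ))).sub hPM)).div ((tendsto_const_nhds (x := (1:ℝ))).sub hPn) hn1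
    have e2 : Real.exp (-c) / Real.exp (-L) * (1 - Real.exp (-L)) / (1 - Real.exp (-c)) = (Real.exp 1)⁻¹ := by
      have h1 : (1 - (Real.exp c)⁻¹) ≠ 0 := by rwa [Real.exp_neg] at hn1
      have h2 : Real.exp c ≠ 0 := (Real.exp_pos _).ne'
      have h3 : Real.exp L ≠ 0 := (Real.exp_pos _).ne'
      have h4 : Real.exp (-c) / Real.exp (-L) * (1 - Real.exp (-L)) / (1 - Real.exp (-c))
          = (Real.exp L - 1) / (Real.exp c - 1) := by
        rw [Real.exp_neg, Real.exp_neg]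
        have := hec.ne'
        field_simp
      rw [h4, heL]
      field_simp
      ring
    rw [e2] at h
    refine h.congr' ?_
    filter_upwards [hq0, eventually_ge_atTop 2] with n hq hn
    have hn0 : (0:ℝ) < n := by positivity
    have h2 : c / (n:ℝ) ≠ 0 := by positivity
    rw [aa, hqn n (by omega), hqn n (by omega)]
    have hs : (1 - c / (n:ℝ)) ^ n = (1 - c / (n:ℝ)) ^ (n - Mstar n) * (1 - c / (n:ℝ)) ^ Mstar n := by
      rw [← pow_add]; congr 1; have := hMstar n hn; omega
    have hp : (1 - c / (n:ℝ)) ^ Mstar n ≠ 0 := by positivity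
    have h5 : (1 - c / (n:ℝ)) ^ n / (1 - c / (n:ℝ)) ^ Mstar n = (1 - c / (n:ℝ)) ^ (n - Mstar n) := by
      rw [hs, mul_div_cancel_right₀ _ hp]
    simp only [Pi.div_apply]
    rw [h5, ← mul_div_assoc, div_div_div_cancel_right₀ h2]
  have hlg : Tendsto (fun n : ℕ => -Real.log (aa (1 - c / (n:ℝ)) (Mstar n) n)) atTop (nhds 1) := by
    have := (ha.log (by positivity)).neg
    simpa using this
  have hlow := ha.mul hlg
  have hupp := ha.mul ((hlg.add hinv).div hq1 one_ne_zero)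
  rw [mul_one] at hlow
  rw [add_zero, div_one, mul_one] at hupp
  refine tendsto_of_tendsto_of_tendsto_of_le_of_le' hlow hupp ?_ ?_
  · filter_upwards [hq0, eventually_ge_atTop 2] with n hq hn
    obtain ⟨hm1, hm2⟩ := hMstar n hn
    rw [succProb_closed _ hq _ hm1 _ (by omega)]
    exact mul_le_mul_of_nonneg_left (log_lower _ hq _ hm1 _ (by omega)) (aa_pos _ hq _ hm1 _ (by omega)).le
  · filter_upwards [hq0, eventually_ge_atTop 2] with n hq hn
    obtain ⟨hm1, hm2⟩ := hMstar n hn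
    rw [succProb_closed _ hq _ hm1 _ (by omega)]
    refine mul_le_mul_of_nonneg_left ?_ (aa_pos _ hq _ hm1 _ (by omega)).le
    simp only [Pi.div_apply]
    rw [le_div_iff₀ hq, mul_comm]
    have := log_upper _ hq _ hm1 n (by omega)
    have h2 : 0 ≤ 1 / qn (1 - c / (n:ℝ)) n := (one_div_pos.2 (qn_pos _ hq n (by omega))).le
    linarith
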